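/- Assume σ1 ≠ τ1 and Res_x(h1, h1′) ≠ 0. Then h1 has exactly 3 distinct roots ξ1, ξ2, ξ3 in k, the singular locus Sing equals {(0:1:0), (ξ1:0:1), (ξ2:0:1), (ξ3:0:1)}, and Sing has exactly 4 elements. -/

import Mathlib

open MvPolynomial

/-!
Write `f = (y² - φ - ψ)² - 4φψ`. At a singular point of the affine curve `f = 0`, vanishing of
`∂f/∂y` gives `y = 0` or `y² = φ + ψ`. In the second case with `y ≠ 0`, the remaining equations say
`φψ = 0` and `(φψ)' = 0`; as `φ` and `ψ` have simple roots, both then vanish at the point, and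
`y² = φ + ψ = 0` after all. So the affine singular points are the `(ξ, 0)` with `φ(ξ) = ψ(ξ)`. On
the line at infinity the homogenization `F` satisfies `2F - y F_y = 2H²`, where `H` homogenizes
`φ - ψ` and is a nonzero multiple of a power of `x` there; this leaves only the point `(0 : 1 : 0)`.
-/

section SingularZeros

variable {σ τ R : Type*} [CommSemiring R] {F G : MvPolynomial σ R} {v : σ → R} {n : ℕ}

/-- `F` has a singular zero at `v`: all first partial derivatives of `F` vanish there along with
`F`. For homogeneous `F` this is singularity of the projective hypersurface at the point with
homogeneous coordinates `v`. -/
def IsSingularAt (F : MvPolynomial σ R) (v : σ → R) : Prop :=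
  eval v F = 0 ∧ ∀ i, eval v (pderiv i F) = 0

theorem IsSingularAt.add (hF : IsSingularAt F v) (hG : IsSingularAt G v) :
    IsSingularAt (F + G) v :=
  ⟨by simp [hF.1, hG.1], fun i => by simp [hF.2 i, hG.2 i]⟩

theorem IsSingularAt.mul_left (hF : IsSingularAt F v) (G : MvPolynomial σ R) :
    IsSingularAt (G * F) v :=
  ⟨by simp [hF.1], fun i => by simp [hF.1, hF.2 i]⟩

theorem isSingularAt_pow (hF : eval v F = 0) (hn : 2 ≤ n) : IsSingularAt (F ^ n) v :=
  ⟨by simp [hF, show n ≠ 0 by lia], fun i => by simp [hF, show n - 1 ≠ 0 by lia]⟩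

theorem pderiv_rename_of_notMem_range {e : σ → τ} {j : τ} (hj : j ∉ Set.range e)
    (F : MvPolynomial σ R) : pderiv j (rename e F) = 0 := by
  classical
  refine pderiv_eq_zero_of_notMem_vars fun hmem => hj ?_
  obtain ⟨i, -, hi⟩ := Finset.mem_image.1 (vars_rename e F hmem)
  exact ⟨i, hi⟩

theorem IsSingularAt.rename {e : σ → τ} (he : e.Injective) {w : τ → R}
    (hF : IsSingularAt F (w ∘ e)) : IsSingularAt (rename e F) w := by
  refine ⟨by simpa [eval_rename] using hF.1, fun j => ?_⟩
  by_cases hj : j ∈ Set.range e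
  · obtain ⟨i, rfl⟩ := hj
    simpa [pderiv_rename he, eval_rename] using hF.2 i
  · rw [pderiv_rename_of_notMem_range hj, map_zero]

theorem eval_smul_of_isHomogeneous (hF : F.IsHomogeneous n) (c : R) (v : σ → R) :
    eval (c • v) F = c ^ n * eval v F := by
  simp only [eval_eq, Finset.mul_sum]
  refine Finset.sum_congr rfl fun d hd => ?_
  simp only [Pi.smul_apply, smul_eq_mul, mul_pow, Finset.prod_mul_distrib,
    Finset.prod_pow_eq_pow_sum, hF.degree_eq_sum_deg_support hd]
  ring

theorem eval_zero_of_isHomogeneous (hF : F.IsHomogeneous n) (hn : n ≠ 0) : eval 0 F = 0 := by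
  rw [eval_zero, constantCoeff_eq]
  exact hF.coeff_eq_zero (by simpa using hn.symm)

theorem isSingularAt_zero_of_isHomogeneous (hF : F.IsHomogeneous n) (hn : 2 ≤ n) :
    IsSingularAt F 0 :=
  ⟨eval_zero_of_isHomogeneous hF (by lia),
    fun _ => eval_zero_of_isHomogeneous hF.pderiv (by lia)⟩

theorem isSingularAt_units_smul_iff (hF : F.IsHomogeneous n) (c : Rˣ) :
    IsSingularAt F (c • v) ↔ IsSingularAt F v := by
  simp only [IsSingularAt, Units.smul_def, eval_smul_of_isHomogeneous hF,
    eval_smul_of_isHomogeneous hF.pderiv, ← Units.val_pow_eq_pow_val, Units.mul_right_eq_zero]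

end SingularZeros

section Dehomogenization

variable {R : Type*} [CommSemiring R] {F G : MvPolynomial (Fin 3) R} {n : ℕ}

/-- The restriction `F(x, y, z) ↦ F(x, y, 1)` of a ternary form to the affine chart `z = 1`. -/
noncomputable def dehomogenize : MvPolynomial (Fin 3) R →ₐ[R] MvPolynomial (Fin 2) R :=
  aeval ![X 0, X 1, 1]

theorem dehomogenize_monomial (d : Fin 3 →₀ ℕ) (c : R) :
    dehomogenize (monomial d c) =
      monomial (Finsupp.single 0 (d 0) + Finsupp.single 1 (d 1)) c := by
  simp [dehomogenize, Finsupp.prod_fintype, Fin.prod_univ_three, monomial_eq, pow_add]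

theorem coeff_dehomogenize (hF : F.IsHomogeneous n) {d : Fin 3 →₀ ℕ} (hd : d.degree = n) :
    coeff (Finsupp.single 0 (d 0) + Finsupp.single 1 (d 1)) (dehomogenize F) = coeff d F := by
  rw [F.as_sum, map_sum, coeff_sum, coeff_sum]
  refine Finset.sum_congr rfl fun e he => ?_
  have hed : e.degree = d.degree := hd ▸ (hF.degree_eq_sum_deg_support he).symm
  rw [dehomogenize_monomial, coeff_monomial, coeff_monomial]
  congr 1
  simp only [Finsupp.degree_eq_sum, Fin.sum_univ_three] at hed
  simp [Finsupp.ext_iff, Fin.forall_fin_succ]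
  lia

theorem eq_of_dehomogenize_eq (hF : F.IsHomogeneous n) (hG : G.IsHomogeneous n)
    (h : dehomogenize F = dehomogenize G) : F = G := by
  ext d
  by_cases hd : d.degree = n
  · rw [← coeff_dehomogenize hF hd, h, coeff_dehomogenize hG hd]
  · rw [hF.coeff_eq_zero hd, hG.coeff_eq_zero hd]

theorem eval_dehomogenize (F : MvPolynomial (Fin 3) R) (x y : R) :
    eval ![x, y] (dehomogenize F) = eval ![x, y, 1] F := by
  induction F using MvPolynomial.induction_on with
  | C a => simp [dehomogenize]
  | add p q hp hq => simp [hp, hq]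
  | mul_X p i hp => fin_cases i <;> simp_all [dehomogenize]

theorem pderiv_dehomogenize (F : MvPolynomial (Fin 3) R) (i : Fin 2) :
    pderiv i (dehomogenize F) = dehomogenize (pderiv i.castSucc F) := by
  induction F using MvPolynomial.induction_on with
  | C a => simp [dehomogenize]
  | add p q hp hq => simp [hp, hq]
  | mul_X p j hp => fin_cases i <;> fin_cases j <;> simp_all [dehomogenize, pderiv_X]

-- Euler's identity recovers `∂F/∂z` on the chart from `F`, `∂F/∂x` and `∂F/∂y`.
theorem isSingularAt_dehomogenize_iff (hF : F.IsHomogeneous n) {x y : R} :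
    IsSingularAt (dehomogenize F) ![x, y] ↔ IsSingularAt F ![x, y, 1] := by
  have euler : x * eval ![x, y, 1] (pderiv 0 F) + y * eval ![x, y, 1] (pderiv 1 F)
      + eval ![x, y, 1] (pderiv 2 F) = n * eval ![x, y, 1] F := by
    simpa [Fin.sum_univ_three] using congrArg (eval ![x, y, 1]) hF.sum_X_mul_pderiv
  simp only [IsSingularAt, pderiv_dehomogenize, eval_dehomogenize, Fin.forall_fin_succ,
    Fin.castSucc_zero, Fin.castSucc_one, Fin.succ_zero_eq_one, Fin.succ_one_eq_two,
    IsEmpty.forall_iff, and_true]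
  exact ⟨fun ⟨h, hx, hy⟩ => ⟨h, hx, hy, by simpa [h, hx, hy] using euler⟩,
    fun ⟨h, hx, hy, _⟩ => ⟨h, hx, hy⟩⟩

end Dehomogenization

section ProjectivePlane

open scoped LinearAlgebra.Projectivization

variable {k : Type*} [Field k]

/-- The singular locus of the plane projective curve `F = 0`. Representatives are chosen by
`Projectivization.rep`, which is harmless for homogeneous `F`: see `mk_mem_singularLocus_iff`. -/
def singularLocus (F : MvPolynomial (Fin 3) k) : Set (ℙ k (Fin 3 → k)) :=
  {P | IsSingularAt F P.rep}

theorem mk_mem_singularLocus_iff {F : MvPolynomial (Fin 3) k} {n : ℕ} (hF : F.IsHomogeneous n)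
    {v : Fin 3 → k} (hv : v ≠ 0) :
    Projectivization.mk k v hv ∈ singularLocus F ↔ IsSingularAt F v := by
  obtain ⟨c, hc⟩ := Projectivization.exists_smul_eq_mk_rep k v hv
  rw [singularLocus, Set.mem_ofPred_eq, ← hc, isSingularAt_units_smul_iff hF]

/-- The point `(x : y : 1)` of the affine chart `z ≠ 0`. -/
def affinePoint (x y : k) : ℙ k (Fin 3 → k) :=
  .mk k ![x, y, 1] fun h => by simpa using congrFun h 2

/-- The point `(1 : y : 0)` at infinity, in the direction of slope `y`. -/
def slopePoint (y : k) : ℙ k (Fin 3 → k) :=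
  .mk k ![1, y, 0] fun h => by simpa using congrFun h 0

variable (k) in
/-- The point `(0 : 1 : 0)` at infinity, in the vertical direction. -/
def verticalPoint : ℙ k (Fin 3 → k) :=
  .mk k ![0, 1, 0] fun h => by simpa using congrFun h 1

theorem eq_affinePoint_or_slopePoint_or_verticalPoint (P : ℙ k (Fin 3 → k)) :
    (∃ x y, P = affinePoint x y) ∨ (∃ y, P = slopePoint y) ∨ P = verticalPoint k := by
  induction P using Projectivization.ind with | _ v hv
  simp only [affinePoint, slopePoint, verticalPoint, Projectivization.mk_eq_mk_iff',
    funext_iff, Fin.forall_fin_succ]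
  by_cases hz : v 2 = 0
  · by_cases hx : v 0 = 0
    · exact .inr (.inr ⟨v 1, by simp [hx, hz]⟩)
    · exact .inr (.inl ⟨v 1 / v 0, v 0, by simp [hz, mul_div_cancel₀ _ hx]⟩)
  · exact .inl ⟨v 0 / v 2, v 1 / v 2, v 2, by simp [mul_div_cancel₀ _ hz]⟩

theorem affinePoint_left_injective (y : k) : (affinePoint · y).Injective := by
  intro x x' h
  obtain ⟨a, ha⟩ := (Projectivization.mk_eq_mk_iff' ..).1 h
  have ha1 : a = 1 := by simpa using congrFun ha 2
  simpa [ha1] using (congrFun ha 0).symm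

theorem affinePoint_ne_verticalPoint (x y : k) : affinePoint x y ≠ verticalPoint k := by
  intro h
  obtain ⟨a, ha⟩ := (Projectivization.mk_eq_mk_iff' ..).1 h
  simpa using congrFun ha 2

theorem ncard_insert_verticalPoint_image_affinePoint {s : Set k} (hs : s.Finite) (y : k) :
    (insert (verticalPoint k) ((affinePoint · y) '' s)).ncard = s.ncard + 1 := by
  rw [Set.ncard_insert_of_notMem _ (hs.image _),
    Set.ncard_image_of_injective s (affinePoint_left_injective y)]
  rintro ⟨x, -, hx⟩
  exact affinePoint_ne_verticalPoint x y hx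

end ProjectivePlane

section SqrtSumCurve

open scoped Polynomial

section CommRing

variable {R : Type*} [CommRing R]

theorem pderiv_toMvPolynomial {σ : Type*} (i : σ) (p : R[X]) :
    pderiv i (p.toMvPolynomial i) = (Polynomial.derivative p).toMvPolynomial i := by
  simp [Polynomial.toMvPolynomial, Derivation.map_aeval]

theorem pderiv_toMvPolynomial_of_ne {σ : Type*} {i j : σ} (h : j ≠ i) (p : R[X]) :
    pderiv i (p.toMvPolynomial j) = 0 := by
  simp [Polynomial.toMvPolynomial, Derivation.map_aeval, pderiv_X_of_ne h]

/-- The polynomial `y⁴ - 2(φ + ψ)y² + (φ - ψ)²` in `x = X 0` and `y = X 1`: the product of the four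
factors `y ± √φ ± √ψ`. -/
noncomputable def sqrtSumCurve (φ ψ : R[X]) : MvPolynomial (Fin 2) R :=
  X 1 ^ 4 - C 2 * (φ.toMvPolynomial 0 + ψ.toMvPolynomial 0) * X 1 ^ 2
    + (φ.toMvPolynomial 0 - ψ.toMvPolynomial 0) ^ 2

theorem eval_sqrtSumCurve (φ ψ : R[X]) (x y : R) :
    eval ![x, y] (sqrtSumCurve φ ψ) =
      y ^ 4 - 2 * (φ.eval x + ψ.eval x) * y ^ 2 + (φ.eval x - ψ.eval x) ^ 2 := by
  simp [sqrtSumCurve, eval_toMvPolynomial]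

theorem eval_pderiv_zero_sqrtSumCurve (φ ψ : R[X]) (x y : R) :
    eval ![x, y] (pderiv 0 (sqrtSumCurve φ ψ)) =
      2 * (φ.eval x - ψ.eval x) * (φ.derivative.eval x - ψ.derivative.eval x)
        - 2 * (φ.derivative.eval x + ψ.derivative.eval x) * y ^ 2 := by
  simp [sqrtSumCurve, eval_toMvPolynomial, pderiv_toMvPolynomial]
  ring

theorem eval_pderiv_one_sqrtSumCurve (φ ψ : R[X]) (x y : R) :
    eval ![x, y] (pderiv 1 (sqrtSumCurve φ ψ)) =
      4 * y * (y ^ 2 - (φ.eval x + ψ.eval x)) := by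
  simp [sqrtSumCurve, eval_toMvPolynomial, pderiv_toMvPolynomial_of_ne]
  ring

/-- The homogenization of `p` of degree `m` as a form in `x = X 0` and `z = X 2`. -/
noncomputable def homogenizeXZ (p : R[X]) (m : ℕ) : MvPolynomial (Fin 3) R :=
  rename ![0, 2] (p.homogenize m)

theorem isHomogeneous_homogenizeXZ (p : R[X]) (m : ℕ) : (homogenizeXZ p m).IsHomogeneous m :=
  p.isHomogeneous_homogenize.rename_isHomogeneous

theorem dehomogenize_homogenizeXZ {p : R[X]} {m : ℕ} (hp : p.natDegree ≤ m) :
    dehomogenize (homogenizeXZ p m) = p.toMvPolynomial 0 := by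
  rw [dehomogenize, homogenizeXZ, aeval_rename, Polynomial.aeval_homogenize_of_eq_one hp _ rfl]
  rfl

theorem pderiv_one_homogenizeXZ (p : R[X]) (m : ℕ) : pderiv 1 (homogenizeXZ p m) = 0 :=
  pderiv_rename_of_notMem_range (by simp) _

theorem eval_homogenizeXZ_of_eq_zero (p : R[X]) (m : ℕ) {v : Fin 3 → R} (hv : v 2 = 0) :
    eval v (homogenizeXZ p m) = p.coeff m * v 0 ^ m := by
  rw [homogenizeXZ, eval_rename, Polynomial.homogenize, map_sum, Finset.sum_eq_single (m, 0)]
  · simp [eval_monomial, Finsupp.prod_fintype]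
  · rintro ⟨i, j⟩ hij hne
    have hj : j ≠ 0 := by
      rintro rfl
      simp_all
    simp [eval_monomial, hv, Finsupp.prod_fintype, hj]
  · simp

theorem isSingularAt_homogenizeXZ_zero_one_zero (p : R[X]) {m : ℕ} (hm : 2 ≤ m) :
    IsSingularAt (homogenizeXZ p m) ![0, 1, 0] := by
  refine IsSingularAt.rename (by decide) ?_
  convert isSingularAt_zero_of_isHomogeneous p.isHomogeneous_homogenize hm using 1
  ext i
  fin_cases i <;> rfl

/-- The homogenization of `sqrtSumCurve φ ψ` of degree `2n`, where `φ + ψ` and `φ - ψ` have degree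
at most `2n - 2` and `n`. The exponents are truncated differences, so `n` should be at least `2`. -/
noncomputable def sqrtSumForm (φ ψ : R[X]) (n : ℕ) : MvPolynomial (Fin 3) R :=
  X 1 ^ 4 * X 2 ^ (2 * n - 4) - C 2 * homogenizeXZ (φ + ψ) (2 * n - 2) * X 1 ^ 2
    + homogenizeXZ (φ - ψ) n ^ 2

variable {φ ψ : R[X]} {n : ℕ}

theorem isHomogeneous_sqrtSumForm (hn : 2 ≤ n) :
    (sqrtSumForm φ ψ n).IsHomogeneous (2 * n) := by
  have h₁ : (X 1 ^ 4 * X 2 ^ (2 * n - 4) : MvPolynomial (Fin 3) R).IsHomogeneous (2 * n) := by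
    have h := (isHomogeneous_X_pow (R := R) (1 : Fin 3) 4).mul (isHomogeneous_X_pow 2 (2 * n - 4))
    rwa [show 4 + (2 * n - 4) = 2 * n by lia] at h
  have h₂ : (C 2 * homogenizeXZ (φ + ψ) (2 * n - 2) * X 1 ^ 2).IsHomogeneous (2 * n) := by
    have h := ((isHomogeneous_homogenizeXZ (φ + ψ) (2 * n - 2)).C_mul 2).mul
      (isHomogeneous_X_pow 1 2)
    rwa [show 2 * n - 2 + 2 = 2 * n by lia] at h
  have h₃ : (homogenizeXZ (φ - ψ) n ^ 2).IsHomogeneous (2 * n) := by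
    simpa [mul_comm] using (isHomogeneous_homogenizeXZ (φ - ψ) n).pow 2
  exact (h₁.sub h₂).add h₃

theorem dehomogenize_sqrtSumForm (hadd : (φ + ψ).natDegree ≤ 2 * n - 2)
    (hsub : (φ - ψ).natDegree ≤ n) :
    dehomogenize (sqrtSumForm φ ψ n) = sqrtSumCurve φ ψ := by
  simp only [sqrtSumForm, sqrtSumCurve, map_add, map_sub, map_mul, map_pow,
    dehomogenize_homogenizeXZ hadd, dehomogenize_homogenizeXZ hsub]
  simp [dehomogenize]

theorem two_mul_sqrtSumForm_sub_pderiv (φ ψ : R[X]) (n : ℕ) :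
    2 * sqrtSumForm φ ψ n - X 1 * pderiv 1 (sqrtSumForm φ ψ n) =
      2 * (homogenizeXZ (φ - ψ) n ^ 2 - X 1 ^ 4 * X 2 ^ (2 * n - 4)) := by
  simp [sqrtSumForm, pderiv_one_homogenizeXZ, pderiv_X]
  ring

theorem isSingularAt_sqrtSumForm_zero_one_zero (φ ψ : R[X]) (hn : 3 ≤ n) :
    IsSingularAt (sqrtSumForm φ ψ n) ![0, 1, 0] := by
  have h₁ : IsSingularAt (X 1 ^ 4 * X 2 ^ (2 * n - 4)) ![(0 : R), 1, 0] :=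
    (isSingularAt_pow (by simp) (by lia)).mul_left _
  have h₂ := (isSingularAt_homogenizeXZ_zero_one_zero (φ + ψ) (m := 2 * n - 2) (by lia)).mul_left
    (-C 2 * X 1 ^ 2)
  have h₃ := (isSingularAt_homogenizeXZ_zero_one_zero (φ - ψ) (m := n) (by lia)).mul_left
    (homogenizeXZ (φ - ψ) n)
  convert (h₁.add h₂).add h₃ using 1
  rw [sqrtSumForm]
  ring

end CommRing

section Field

variable {k : Type*} [Field k] {φ ψ : k[X]} {n : ℕ}

theorem isRoot_and_isRoot_of_isRoot_derivative_mul (hφ : φ.Separable) (hψ : ψ.Separable) {x : k}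
    (h : (φ * ψ).IsRoot x) (h' : (φ * ψ).derivative.IsRoot x) : φ.IsRoot x ∧ ψ.IsRoot x := by
  simp only [Polynomial.IsRoot.def, Polynomial.derivative_mul, Polynomial.eval_add,
    Polynomial.eval_mul, mul_eq_zero] at h h' ⊢
  rcases h with hx | hx
  · have : φ.derivative.eval x ≠ 0 := hφ.eval₂_derivative_ne_zero (RingHom.id k) hx
    simp_all
  · have : ψ.derivative.eval x ≠ 0 := hψ.eval₂_derivative_ne_zero (RingHom.id k) hx
    simp_all

theorem isSingularAt_sqrtSumCurve_iff [NeZero (2 : k)] (hφ : φ.Separable) (hψ : ψ.Separable)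
    {x y : k} :
    IsSingularAt (sqrtSumCurve φ ψ) ![x, y] ↔ y = 0 ∧ φ.eval x = ψ.eval x := by
  have four_ne_zero : (4 : k) ≠ 0 := by
    convert pow_ne_zero 2 (two_ne_zero (α := k))
    norm_num
  rw [IsSingularAt, Fin.forall_fin_two, eval_sqrtSumCurve, eval_pderiv_zero_sqrtSumCurve,
    eval_pderiv_one_sqrtSumCurve]
  refine ⟨fun ⟨hf, hfx, hfy⟩ => ?_, fun ⟨hy, hx⟩ => by simp [hy, hx]⟩
  have hy : y = 0 := by
    by_contra hy
    have hy2 : y ^ 2 = φ.eval x + ψ.eval x := by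
      simpa [four_ne_zero, hy, sub_eq_zero] using hfy
    have hmul : (φ * ψ).IsRoot x := by
      refine (mul_eq_zero_iff_left four_ne_zero).1 ?_
      rw [Polynomial.eval_mul]
      linear_combination (y ^ 2 - φ.eval x - ψ.eval x) * hy2 - hf
    have hmul' : (φ * ψ).derivative.IsRoot x := by
      refine (mul_eq_zero_iff_left four_ne_zero).1 ?_
      rw [Polynomial.derivative_mul, Polynomial.eval_add, Polynomial.eval_mul, Polynomial.eval_mul]
      linear_combination -2 * (φ.derivative.eval x + ψ.derivative.eval x) * hy2 - hfx
    obtain ⟨hφx, hψx⟩ := isRoot_and_isRoot_of_isRoot_derivative_mul hφ hψ hmul hmul'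
    exact hy (by simpa [hφx.eq_zero, hψx.eq_zero] using hy2)
  exact ⟨hy, by simpa [hy, sub_eq_zero] using hf⟩

theorem not_isSingularAt_sqrtSumForm_one_zero [NeZero (2 : k)] (hsub : (φ - ψ).coeff n ≠ 0)
    (hn : 3 ≤ n) (y : k) : ¬IsSingularAt (sqrtSumForm φ ψ n) ![1, y, 0] := by
  intro h
  have hH : eval ![1, y, 0] (homogenizeXZ (φ - ψ) n) = (φ - ψ).coeff n := by
    simpa using eval_homogenizeXZ_of_eq_zero (φ - ψ) n (v := ![1, y, 0]) rfl
  have hH2 := congrArg (eval ![1, y, 0]) (two_mul_sqrtSumForm_sub_pderiv φ ψ n)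
  simp only [map_sub, map_mul, map_pow, h.1, h.2 1, hH] at hH2
  exact hsub (by simpa [two_ne_zero, show 2 * n - 4 ≠ 0 by lia] using hH2)

theorem singularLocus_eq_of_dehomogenize_eq_sqrtSumCurve [NeZero (2 : k)]
    (hφ : φ.Separable) (hψ : ψ.Separable) (hn : 3 ≤ n)
    (hadd : (φ + ψ).natDegree ≤ 2 * n - 2) (hsub : (φ - ψ).natDegree = n)
    {F : MvPolynomial (Fin 3) k} (hF : F.IsHomogeneous (2 * n))
    (hFf : dehomogenize F = sqrtSumCurve φ ψ) :
    singularLocus F =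
      insert (verticalPoint k) ((affinePoint · 0) '' {x | φ.eval x = ψ.eval x}) := by
  have hFform : F = sqrtSumForm φ ψ n := eq_of_dehomogenize_eq hF
    (isHomogeneous_sqrtSumForm (by lia)) (hFf.trans (dehomogenize_sqrtSumForm hadd hsub.le).symm)
  have affine (x y : k) :
      affinePoint x y ∈ singularLocus F ↔ y = 0 ∧ φ.eval x = ψ.eval x := by
    rw [affinePoint, mk_mem_singularLocus_iff hF, ← isSingularAt_dehomogenize_iff hF, hFf,
      isSingularAt_sqrtSumCurve_iff hφ hψ]
  have slope (y : k) : slopePoint y ∉ singularLocus F := by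
    rw [slopePoint, mk_mem_singularLocus_iff hF, hFform]
    refine not_isSingularAt_sqrtSumForm_one_zero ?_ hn y
    rw [← hsub]
    exact Polynomial.leadingCoeff_ne_zero.2 (Polynomial.ne_zero_of_natDegree_gt (hsub ▸ hn))
  have vertical : verticalPoint k ∈ singularLocus F := by
    rw [verticalPoint, mk_mem_singularLocus_iff hF, hFform]
    exact isSingularAt_sqrtSumForm_zero_one_zero φ ψ hn
  refine Set.Subset.antisymm (fun P hP => ?_) (Set.insert_subset vertical ?_)
  · obtain ⟨x, y, rfl⟩ | ⟨y, rfl⟩ | rfl := eq_affinePoint_or_slopePoint_or_verticalPoint P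
    · obtain ⟨rfl, hx⟩ := (affine x y).1 hP
      exact .inr ⟨x, hx, rfl⟩
    · exact absurd hP (slope y)
    · exact .inl rfl
  · rintro _ ⟨x, hx, rfl⟩
    exact (affine x 0).2 ⟨rfl, hx⟩

end Field

end SqrtSumCurve

section Cubic

open scoped Polynomial

theorem det_sylvester_cubic_derivative {R : Type*} [CommRing R] (P : Cubic R) :
    Matrix.det
      !![P.a, P.b, P.c, P.d, 0;
         0, P.a, P.b, P.c, P.d;
         3 * P.a, 2 * P.b, P.c, 0, 0;
         0, 3 * P.a, 2 * P.b, P.c, 0;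
         0, 0, 3 * P.a, 2 * P.b, P.c] = -P.a * P.discr := by
  simp [Matrix.det_succ_row_zero, Fin.sum_univ_succ, Cubic.discr, Fin.succAbove]
  ring

variable {k : Type*} [Field k]

theorem exists_distinct_roots_of_cubic_discr_ne_zero [IsAlgClosed k] {P : Cubic k} (ha : P.a ≠ 0)
    (hP : P.discr ≠ 0) :
    ∃ x y z, x ≠ y ∧ x ≠ z ∧ y ≠ z ∧ ∀ t, P.toPoly.eval t = 0 ↔ t = x ∨ t = y ∨ t = z := by
  obtain ⟨x, y, z, h⟩ := (Cubic.splits_iff_roots_eq_three (φ := RingHom.id k) ha).1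
    (IsAlgClosed.splits _)
  obtain ⟨hxy, hxz, hyz⟩ := (Cubic.discr_ne_zero_iff_roots_ne ha h).1 hP
  refine ⟨x, y, z, hxy, hxz, hyz, fun t => ?_⟩
  have hP0 : P.toPoly ≠ 0 := fun h => by simpa [h] using Cubic.natDegree_of_a_ne_zero ha
  simpa [Polynomial.IsRoot, hP0, Cubic.map_roots] using congrArg (t ∈ ·) h

end Cubic

theorem exists_singularLocus_eq_of_sub_eq_cubic {k : Type*} [Field k] [IsAlgClosed k]
    [NeZero (2 : k)] {φ ψ : Polynomial k} (hφ : φ.Separable) (hψ : ψ.Separable)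
    (hadd : (φ + ψ).natDegree ≤ 4) {P : Cubic k} (hsub : ψ - φ = P.toPoly) (ha : P.a ≠ 0)
    (hP : P.discr ≠ 0) {F : MvPolynomial (Fin 3) k} (hF : F.IsHomogeneous 6)
    (hFf : dehomogenize F = sqrtSumCurve φ ψ) :
    ∃ x y z, x ≠ y ∧ x ≠ z ∧ y ≠ z
      ∧ (∀ t, P.toPoly.eval t = 0 ↔ t = x ∨ t = y ∨ t = z)
      ∧ singularLocus F =
        {verticalPoint k, affinePoint x 0, affinePoint y 0, affinePoint z 0}
      ∧ (singularLocus F).ncard = 4 := by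
  obtain ⟨x, y, z, hxy, hxz, hyz, hroots⟩ := exists_distinct_roots_of_cubic_discr_ne_zero ha hP
  have hdeg : (φ - ψ).natDegree = 3 := by
    rw [Polynomial.natDegree_sub, hsub, Cubic.natDegree_of_a_ne_zero ha]
  have hzero : {t | φ.eval t = ψ.eval t} = {x, y, z} := by
    ext t
    rw [Set.mem_ofPred_eq, eq_comm, ← sub_eq_zero, ← Polynomial.eval_sub, hsub, hroots]
    rfl
  have hsing :=
    singularLocus_eq_of_dehomogenize_eq_sqrtSumCurve hφ hψ le_rfl hadd hdeg hF hFf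
  rw [hzero] at hsing
  refine ⟨x, y, z, hxy, hxz, hyz, hroots, ?_, ?_⟩
  · rw [hsing, Set.image_insert_eq, Set.image_pair]
  · rw [hsing, ncard_insert_verticalPoint_image_affinePoint (Set.toFinite _),
      Set.ncard_eq_three.2 ⟨x, y, z, hxy, hxz, hyz, rfl⟩]

section Quartic

open scoped Polynomial

/-- The monic quartic with roots `a, b, c, d`. -/
noncomputable def quartic {R : Type*} [CommRing R] (a b c d : R) : R[X] :=
  (.X - .C a) * (.X - .C b) * (.X - .C c) * (.X - .C d)

theorem toMvPolynomial_quartic {σ R : Type*} [CommRing R] (a b c d : R) (i : σ) :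
    (quartic a b c d).toMvPolynomial i = (X i - C a) * (X i - C b) * (X i - C c) * (X i - C d) := by
  simp [quartic]

theorem natDegree_quartic_le {R : Type*} [CommRing R] (a b c d : R) :
    (quartic a b c d).natDegree ≤ 4 := by
  rw [quartic]
  compute_degree

theorem quartic_eq_X_pow_add_toPoly {R : Type*} [CommRing R] (a b c d : R) :
    quartic a b c d = .X ^ 4 +
      Cubic.toPoly ⟨-(a + b + c + d), a * b + a * c + a * d + b * c + b * d + c * d,
        -(a * b * c + a * b * d + a * c * d + b * c * d), a * b * c * d⟩ := by
  simp only [quartic, Cubic.toPoly, map_neg, map_add, map_mul]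
  ring

theorem separable_quartic {k : Type*} [Field k] {a b c d : k}
    (h : [a, b, c, d].Pairwise (· ≠ ·)) : (quartic a b c d).Separable := by
  have hinj : Function.Injective ![a, b, c, d] := List.nodup_ofFn.1 (by simpa using! h)
  simpa [quartic, Fin.prod_univ_four] using Polynomial.separable_prod_X_sub_C_iff.2 hinj

end Quartic

theorem stmt_12_general
    {k : Type*} [Field k] [IsAlgClosed k] [NeZero (2 : k)]
    (α1 α2 α3 α4 β1 β2 β3 β4 : k)
    (hα : [α1, α2, α3, α4].Pairwise (· ≠ ·)) (hβ : [β1, β2, β3, β4].Pairwise (· ≠ ·))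
    (σ1 σ2 σ3 σ4 τ1 τ2 τ3 τ4 : k)
    (hσ1 : σ1 = α1 + α2 + α3 + α4)
    (hσ2 : σ2 = α1 * α2 + α1 * α3 + α1 * α4 + α2 * α3 + α2 * α4 + α3 * α4)
    (hσ3 : σ3 = α1 * α2 * α3 + α1 * α2 * α4 + α1 * α3 * α4 + α2 * α3 * α4)
    (hσ4 : σ4 = α1 * α2 * α3 * α4)
    (hτ1 : τ1 = β1 + β2 + β3 + β4)
    (hτ2 : τ2 = β1 * β2 + β1 * β3 + β1 * β4 + β2 * β3 + β2 * β4 + β3 * β4)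
    (hτ3 : τ3 = β1 * β2 * β3 + β1 * β2 * β4 + β1 * β3 * β4 + β2 * β3 * β4)
    (hτ4 : τ4 = β1 * β2 * β3 * β4)
    (φ1 φ2 f : MvPolynomial (Fin 2) k)
    (hφ1 : φ1 = (X 0 - C α1) * (X 0 - C α2) * (X 0 - C α3) * (X 0 - C α4))
    (hφ2 : φ2 = (X 0 - C β1) * (X 0 - C β2) * (X 0 - C β3) * (X 0 - C β4))
    (hf : f = X 1 ^ 4 - C 2 * (φ1 + φ2) * X 1 ^ 2 + (φ1 - φ2) ^ 2)
    (F : MvPolynomial (Fin 3) k)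
    (hFhom : F.IsHomogeneous 6)
    (hFf : aeval ![(X 0 : MvPolynomial (Fin 2) k), X 1, 1] F = f)
    (Sing : Set (Projectivization k (Fin 3 → k)))
    (hSing : ∀ P : Projectivization k (Fin 3 → k),
      P ∈ Sing ↔ (eval P.rep F = 0 ∧
        eval P.rep (pderiv 0 F) = 0 ∧
        eval P.rep (pderiv 1 F) = 0 ∧
        eval P.rep (pderiv 2 F) = 0))
    (h1 : k → k)
    (hh1 : ∀ x : k, h1 x = (σ1 - τ1) * x ^ 3 - (σ2 - τ2) * x ^ 2 + (σ3 - τ3) * x - (σ4 - τ4))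
    (res1 : k)
    (hres1 : res1 = Matrix.det
      !![σ1 - τ1, -(σ2 - τ2), σ3 - τ3, -(σ4 - τ4), 0;
         0, σ1 - τ1, -(σ2 - τ2), σ3 - τ3, -(σ4 - τ4);
         3 * (σ1 - τ1), -2 * (σ2 - τ2), σ3 - τ3, 0, 0;
         0, 3 * (σ1 - τ1), -2 * (σ2 - τ2), σ3 - τ3, 0;
         0, 0, 3 * (σ1 - τ1), -2 * (σ2 - τ2), σ3 - τ3])
    (hστ : σ1 ≠ τ1) (hr1 : res1 ≠ 0) :
    ∃ ξ1 ξ2 ξ3 : k, ξ1 ≠ ξ2 ∧ ξ1 ≠ ξ3 ∧ ξ2 ≠ ξ3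
      ∧ (∀ x : k, h1 x = 0 ↔ x = ξ1 ∨ x = ξ2 ∨ x = ξ3)
      ∧ Sing = {Projectivization.mk k (![0, 1, 0] : Fin 3 → k)
                  (by intro hc; simpa using congrFun hc 1),
                Projectivization.mk k (![ξ1, 0, 1] : Fin 3 → k)
                  (by intro hc; simpa using congrFun hc 2),
                Projectivization.mk k (![ξ2, 0, 1] : Fin 3 → k)
                  (by intro hc; simpa using congrFun hc 2),
                Projectivization.mk k (![ξ3, 0, 1] : Fin 3 → k)
                  (by intro hc; simpa using congrFun hc 2)}
      ∧ Sing.ncard = 4 := by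
  let φ := quartic α1 α2 α3 α4
  let ψ := quartic β1 β2 β3 β4
  let P : Cubic k := ⟨σ1 - τ1, -(σ2 - τ2), σ3 - τ3, -(σ4 - τ4)⟩
  have hsub : ψ - φ = P.toPoly := by
    simp only [φ, ψ, P, quartic_eq_X_pow_add_toPoly, Cubic.toPoly, ← hσ1, ← hσ2, ← hσ3, ← hσ4,
      ← hτ1, ← hτ2, ← hτ3, ← hτ4, map_sub, map_neg]
    ring
  have hres : res1 = -P.a * P.discr := by
    rw [hres1, ← det_sylvester_cubic_derivative]
    simp only [P, neg_mul, mul_neg]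
  have hF : dehomogenize F = sqrtSumCurve φ ψ := by
    rw [sqrtSumCurve, toMvPolynomial_quartic, toMvPolynomial_quartic, ← hφ1, ← hφ2, ← hf, ← hFf]
    rfl
  have heval (x : k) : h1 x = P.toPoly.eval x := by
    simp only [hh1, P, Cubic.toPoly, Polynomial.eval_add, Polynomial.eval_mul, Polynomial.eval_pow,
      Polynomial.eval_C, Polynomial.eval_X]
    ring
  obtain rfl : Sing = singularLocus F := by
    ext Q
    simp [hSing, singularLocus, IsSingularAt, Fin.forall_fin_succ]
  simp only [heval]
  exact exists_singularLocus_eq_of_sub_eq_cubic (separable_quartic hα) (separable_quartic hβ)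
    (Polynomial.natDegree_add_le_of_degree_le (natDegree_quartic_le ..) (natDegree_quartic_le ..))
    hsub (sub_ne_zero.2 hστ) (right_ne_zero_of_mul (hres ▸ hr1)) hFhom hF

/-- Case (I-1): if σ1 ≠ τ1 and Res_x(h1, h1') ≠ 0, then h1 has exactly 3
distinct roots ξ1, ξ2, ξ3 and Sing = {(0:1:0), (ξ1:0:1), (ξ2:0:1), (ξ3:0:1)}
has exactly 4 elements. -/
theorem stmt_12
    {k : Type*} [Field k] [IsAlgClosed k]
    (p : ℕ) [CharP k p] (hp : p = 0 ∨ 5 ≤ p)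
    (α1 α2 α3 α4 β1 β2 β3 β4 : k)
    (hdist : ([α1, α2, α3, α4, β1, β2, β3, β4] : List k).Pairwise (· ≠ ·))
    (σ1 σ2 σ3 σ4 τ1 τ2 τ3 τ4 : k)
    (hσ1 : σ1 = α1 + α2 + α3 + α4)
    (hσ2 : σ2 = α1 * α2 + α1 * α3 + α1 * α4 + α2 * α3 + α2 * α4 + α3 * α4)
    (hσ3 : σ3 = α1 * α2 * α3 + α1 * α2 * α4 + α1 * α3 * α4 + α2 * α3 * α4)
    (hσ4 : σ4 = α1 * α2 * α3 * α4)
    (hτ1 : τ1 = β1 + β2 + β3 + β4)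
    (hτ2 : τ2 = β1 * β2 + β1 * β3 + β1 * β4 + β2 * β3 + β2 * β4 + β3 * β4)
    (hτ3 : τ3 = β1 * β2 * β3 + β1 * β2 * β4 + β1 * β3 * β4 + β2 * β3 * β4)
    (hτ4 : τ4 = β1 * β2 * β3 * β4)
    (φ1 φ2 f : MvPolynomial (Fin 2) k)
    (hφ1 : φ1 = (X 0 - C α1) * (X 0 - C α2) * (X 0 - C α3) * (X 0 - C α4))
    (hφ2 : φ2 = (X 0 - C β1) * (X 0 - C β2) * (X 0 - C β3) * (X 0 - C β4))
    (hf : f = X 1 ^ 4 - C 2 * (φ1 + φ2) * X 1 ^ 2 + (φ1 - φ2) ^ 2)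
    (F : MvPolynomial (Fin 3) k)
    (hFhom : F.IsHomogeneous 6)
    (hFf : aeval ![(X 0 : MvPolynomial (Fin 2) k), X 1, 1] F = f)
    (Sing : Set (Projectivization k (Fin 3 → k)))
    (hSing : ∀ P : Projectivization k (Fin 3 → k),
      P ∈ Sing ↔ (eval P.rep F = 0 ∧
        eval P.rep (pderiv 0 F) = 0 ∧
        eval P.rep (pderiv 1 F) = 0 ∧
        eval P.rep (pderiv 2 F) = 0))
    (h1 : k → k)
    (hh1 : ∀ x : k, h1 x = (σ1 - τ1) * x ^ 3 - (σ2 - τ2) * x ^ 2 + (σ3 - τ3) * x - (σ4 - τ4))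
    -- res1 = Res_x(h1, h1'), the determinant of the Sylvester matrix of the
    -- cubic h1 and its derivative h1'
    (res1 : k)
    (hres1 : res1 = Matrix.det
      !![σ1 - τ1, -(σ2 - τ2), σ3 - τ3, -(σ4 - τ4), 0;
         0, σ1 - τ1, -(σ2 - τ2), σ3 - τ3, -(σ4 - τ4);
         3 * (σ1 - τ1), -2 * (σ2 - τ2), σ3 - τ3, 0, 0;
         0, 3 * (σ1 - τ1), -2 * (σ2 - τ2), σ3 - τ3, 0;
         0, 0, 3 * (σ1 - τ1), -2 * (σ2 - τ2), σ3 - τ3])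
    (hστ : σ1 ≠ τ1) (hr1 : res1 ≠ 0) :
    ∃ ξ1 ξ2 ξ3 : k, ξ1 ≠ ξ2 ∧ ξ1 ≠ ξ3 ∧ ξ2 ≠ ξ3
      ∧ (∀ x : k, h1 x = 0 ↔ x = ξ1 ∨ x = ξ2 ∨ x = ξ3)
      ∧ Sing = {Projectivization.mk k (![0, 1, 0] : Fin 3 → k)
                  (by intro hc; simpa using congrFun hc 1),
                Projectivization.mk k (![ξ1, 0, 1] : Fin 3 → k)
                  (by intro hc; simpa using congrFun hc 2),
                Projectivization.mk k (![ξ2, 0, 1] : Fin 3 → k)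
                  (by intro hc; simpa using congrFun hc 2),
                Projectivization.mk k (![ξ3, 0, 1] : Fin 3 → k)
                  (by intro hc; simpa using congrFun hc 2)}
      ∧ Sing.ncard = 4 := by
  have : NeZero (2 : k) := ⟨Ring.two_ne_zero (by rw [ringChar.eq k p]; lia)⟩
  exact stmt_12_general _ _ _ _ _ _ _ _ (hdist.take (i := 4)) (hdist.drop (i := 4)) _ _ _ _ _ _ _ _
    hσ1 hσ2 hσ3 hσ4 hτ1 hτ2 hτ3 hτ4 _ _ _ hφ1 hφ2 hf F hFhom hFf Sing hSing
    h1 hh1 res1 hres1 hστ hr1
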